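/- Bellman fixed-point property of the upper value: Let 𝒢 = ⟨A, Φ_(Pr,R)⟩ be a 2½-player parity game with arena A = ⟨(S,E),(S₁,S₂,S_N),π⟩ and parity structure (Pr,R). Then the function Val↑(𝒢) : S → [0,1] is a fixed point of the functional 𝓕 : (S → [0,1]) → (S → [0,1]) defined by: 𝓕(f)(s) = R(s) if s is a terminal state; 𝓕(f)(s) = ⨆_{t ∈ E(s)} f(t) if s ∈ S₁; 𝓕(f)(s) = ⨅_{t ∈ E(s)} f(t) if s ∈ S₂; and 𝓕(f)(s) = ∑_{t ∈ E(s)} π(s)(t)·f(t) if s ∈ S_N. -/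

import Mathlib

noncomputable section

open scoped unitInterval Classical

/-- The three agents of a 2½-player game. -/
inductive Player : Type
  | one : Player
  | two : Player
  | nature : Player
deriving DecidableEq

/-- A 2½-player arena: a directed graph `(S, E)`, an assignment of states to the
players (Player 1, Player 2, Nature), and probabilistic transition data at Nature
states. -/
structure Arena (S : Type) where
  E : S → Set S
  owner : S → Player
  prob : S → S → ℝ

namespace Arena

variable {S : Type}

/-- Well-formedness: at every Nature state `s`, `prob s` is a probability
distribution whose support is exactly the set `E s` of successors of `s`. -/
def Wellformed (A : Arena S) : Prop :=
  ∀ s, A.owner s = Player.nature →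
    (∀ t, 0 ≤ A.prob s t) ∧ HasSum (A.prob s) 1 ∧ A.E s = Function.support (A.prob s)

/-- `s` is a terminal state if it has no successors. -/
def Terminal (A : Arena S) (s : S) : Prop := A.E s = ∅

end Arena

/-- An (unbounded memory deterministic) strategy for player `pl` in arena `A`:
given the history `hist` and the current state `s` (a non-terminal state owned by
`pl`), it picks a successor of `s`. -/
structure Strategy {S : Type} (A : Arena S) (pl : Player) where
  next : List S → S → S
  valid : ∀ (hist : List S) (s : S), A.owner s = pl → A.E s ≠ ∅ → next hist s ∈ A.E s

variable {S : Type}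

/-- The Markov chain determined by a strategy profile `(σ1, σ2)` and initial state
`s0`: the tree of finite paths from `s0` in which nodes ending in a Player 1
(resp. Player 2) state are extended uniquely according to `σ1` (resp. `σ2`), nodes
ending in a Nature state branch fully over the successors, and (for the purpose of
encoding finite completed paths as infinite sequences) nodes ending in a terminal
state are extended by repeating the terminal state. -/
inductive MC (A : Arena S) (σ1 : Strategy A Player.one) (σ2 : Strategy A Player.two)
    (s0 : S) : List S → Prop
  | root : MC A σ1 σ2 s0 [s0]
  | one (l : List S) (s : S) : MC A σ1 σ2 s0 (l ++ [s]) → A.owner s = Player.one →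
      A.E s ≠ ∅ → MC A σ1 σ2 s0 (l ++ [s, σ1.next l s])
  | two (l : List S) (s : S) : MC A σ1 σ2 s0 (l ++ [s]) → A.owner s = Player.two →
      A.E s ≠ ∅ → MC A σ1 σ2 s0 (l ++ [s, σ2.next l s])
  | nature (l : List S) (s t : S) : MC A σ1 σ2 s0 (l ++ [s]) →
      A.owner s = Player.nature → t ∈ A.E s → MC A σ1 σ2 s0 (l ++ [s, t])
  | term (l : List S) (s : S) : MC A σ1 σ2 s0 (l ++ [s]) → A.E s = ∅ →
      MC A σ1 σ2 s0 (l ++ [s, s])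

/-- The space of completed paths, encoded as infinite sequences of states
(a finite completed path, i.e. one ending in a terminal state, is encoded by
repeating its terminal state forever). -/
def PathSpace (S : Type) : Type := ℕ → S

instance : MeasurableSpace (PathSpace S) :=
  @MeasurableSpace.pi ℕ (fun _ => S) (fun _ => ⊤)

/-- The basic cylinder set of completed paths extending a finite path. -/
def cyl (l : List S) : Set (PathSpace S) :=
  {u | ∀ i : Fin l.length, u i = l.get i}

/-- the probability of a single step -/
def stepProb (A : Arena S) (s t : S) : ℝ :=
  if A.owner s = Player.nature then A.prob s t else 1

/-- The product of the probabilities of the Nature steps along a finite path. -/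
def pathProb (A : Arena S) : List S → ℝ
  | [] => 1
  | [_] => 1
  | s :: t :: l => stepProb A s t * pathProb A (t :: l)

/-- The weight assigned to a basic cylinder: the product of the probabilities of its
Nature steps if the underlying finite path belongs to the Markov chain, `0` otherwise. -/
def cylWeight (A : Arena S) (σ1 : Strategy A Player.one) (σ2 : Strategy A Player.two)
    (s0 : S) (l : List S) : ℝ :=
  if MC A σ1 σ2 s0 l then pathProb A l else 0

/-- The Borel probability measure on completed paths induced by the Markov chain
`M^{s0}_{σ1,σ2}`: the unique probability measure assigning to every basic cylinder
its weight. -/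
def pathMeasure (A : Arena S) (σ1 : Strategy A Player.one) (σ2 : Strategy A Player.two)
    (s0 : S) : MeasureTheory.Measure (PathSpace S) :=
  if h : ∃ μ : MeasureTheory.Measure (PathSpace S), MeasureTheory.IsProbabilityMeasure μ ∧
      ∀ l : List S, l ≠ [] → μ (cyl l) = ENNReal.ofReal (cylWeight A σ1 σ2 s0 l)
  then h.choose else 0

/-- The payoff function induced by a parity structure `(pri, R)`: a completed path
reaching a terminal state gets the reward `R` of (the first occurrence of) that
terminal state; an infinite path gets `1` if the greatest priority occurring
infinitely often along it is even, and `0` otherwise. -/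
def payoff (A : Arena S) (pri : S → ℕ) (R : S → ℝ) (u : PathSpace S) : ℝ :=
  if h : ∃ i, A.E (u i) = ∅ then R (u (Nat.find h))
  else if Even (sSup {n | {i | pri (u i) = n}.Infinite}) then 1 else 0

/-- The expected reward of Player 1 for the Markov chain `M^{s0}_{σ1,σ2}`:
the integral of the payoff against the induced probability measure on paths. -/
def expReward (A : Arena S) (pri : S → ℕ) (R : S → ℝ) (σ1 : Strategy A Player.one)
    (σ2 : Strategy A Player.two) (s0 : S) : ℝ :=
  ∫ u, payoff A pri R u ∂(pathMeasure A σ1 σ2 s0)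

/-- The lower value `Val↓` of the 2½-player parity game `⟨A, Φ_(pri,R)⟩`. -/
def lowerValue (A : Arena S) (pri : S → ℕ) (R : S → ℝ) (s : S) : ℝ :=
  ⨆ σ1 : Strategy A Player.one, ⨅ σ2 : Strategy A Player.two, expReward A pri R σ1 σ2 s

/-- The upper value `Val↑` of the 2½-player parity game `⟨A, Φ_(pri,R)⟩`. -/
def upperValue (A : Arena S) (pri : S → ℕ) (R : S → ℝ) (s : S) : ℝ :=
  ⨅ σ2 : Strategy A Player.two, ⨆ σ1 : Strategy A Player.one, expReward A pri R σ1 σ2 s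

/-- The Bellman functional `𝓕` on `S → ℝ` associated to the game `⟨A, Φ_(pri,R)⟩`. -/
def bellman (A : Arena S) (R : S → ℝ) (f : S → ℝ) : S → ℝ := fun s =>
  if A.E s = ∅ then R s
  else match A.owner s with
    | Player.one => sSup (f '' A.E s)
    | Player.two => sInf (f '' A.E s)
    | Player.nature => ∑' t : A.E s, A.prob s t * f t

/-- tail of a path -/
def tl (u : PathSpace S) : PathSpace S := fun n => u (n + 1)

theorem mem_cyl_cons (a : S) (l : List S) (u : PathSpace S) :
    u ∈ cyl (a :: l) ↔ u 0 = a ∧ tl u ∈ cyl l := by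
  unfold cyl
  simp only [Set.mem_ofPred_eq]
  constructor
  · intro h
    refine ⟨h ⟨0, by simp⟩, fun i => ?_⟩
    exact h ⟨i.1 + 1, by simp⟩
  · rintro ⟨h0, h⟩ ⟨i, hi⟩
    cases i with
    | zero => exact h0
    | succ n => exact h ⟨n, by simpa using hi⟩

theorem mem_cyl_nil (u : PathSpace S) : u ∈ cyl ([] : List S) := by
  intro i; exact i.elim0

theorem meas_coord (n : ℕ) (B : Set S) : MeasurableSet {u : PathSpace S | u n ∈ B} := by
  let _ : MeasurableSpace S := ⊤
  exact (measurable_pi_apply (X := fun _ : ℕ => S) n) (MeasurableSpace.measurableSet_top (s := B))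

theorem meas_cyl (l : List S) : MeasurableSet (cyl l) := by
  have : cyl l = ⋂ i : Fin l.length, {u : PathSpace S | u i ∈ ({l.get i} : Set S)} := by
    ext u; simp [cyl]
  rw [this]
  exact MeasurableSet.iInter fun i => meas_coord _ _

theorem cyl_disjoint (l l' : List S) (hlen : l.length = l'.length) (h : l ≠ l') :
    Disjoint (cyl l) (cyl l') := by
  rw [Set.disjoint_left]
  intro u hu hu'
  apply h
  apply List.ext_get hlen
  intro n h1 h2
  rw [← hu ⟨n, h1⟩, ← hu' ⟨n, h2⟩]

open MeasureTheory in
theorem law_unique (μ ν : Measure (PathSpace S)) [IsProbabilityMeasure μ] [IsProbabilityMeasure ν]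
    (h : ∀ l : List S, l ≠ [] → μ (cyl l) = ν (cyl l))
    (hC : ∀ n, ∃ C : Set (List S), C.Countable ∧ (∀ l ∈ C, l.length = n + 1) ∧
      ν (⋃ l ∈ C, cyl l) = 1) : μ = ν := by
  let _ : MeasurableSpace S := ⊤
  refine ext_of_generate_finite (squareCylinders (fun _ : ℕ => {s : Set S | MeasurableSet s}))
    (generateFrom_squareCylinders (α := fun _ : ℕ => S)).symm
    (isPiSystem_squareCylinders (fun _ => MeasurableSpace.isPiSystem_measurableSet)
      (fun _ => by simp)) ?_ (by simp)
  rintro B ⟨F, t, -, rfl⟩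
  obtain ⟨C, hCc, hlen, hC1⟩ := hC (F.sup id)
  have hpd : (C).PairwiseDisjoint (fun l => cyl l) := fun a ha b hb hab =>
    cyl_disjoint a b ((hlen a ha).trans (hlen b hb).symm) hab
  have hne : ∀ l ∈ C, l ≠ [] := by
    intro l hl h0; have := hlen l hl; simp [h0] at this
  have hCm : MeasurableSet (⋃ l ∈ C, cyl l) := MeasurableSet.biUnion hCc fun l _ => meas_cyl l
  have hμ1 : μ (⋃ l ∈ C, cyl l) = 1 := by
    rw [← hC1, measure_biUnion hCc hpd fun l _ => meas_cyl l,
      measure_biUnion hCc hpd fun l _ => meas_cyl l]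
    exact tsum_congr fun l => h _ (hne _ l.2)
  have hR : MeasurableSet (show Set (PathSpace S) from (F : Set ℕ).pi t) :=
    MeasurableSet.pi F.countable_toSet (fun i _ => MeasurableSpace.measurableSet_top)
  set Rc : Set (PathSpace S) := (F : Set ℕ).pi t with hRc
  have key : ∀ ρ : Measure (PathSpace S), IsProbabilityMeasure ρ → ρ (⋃ l ∈ C, cyl l) = 1 →
      ρ Rc = ∑' l : C, ρ (Rc ∩ cyl l.1) := by
    intro ρ _ h1
    have h2 : ρ (⋃ l ∈ C, cyl l)ᶜ = 0 := by
      rw [prob_compl_eq_zero_iff hCm]; exact h1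
    have h3 : ρ (Rc \ ⋃ l ∈ C, cyl l) = 0 := measure_mono_null (by intro x hx; exact hx.2) h2
    rw [← measure_inter_add_sdiff Rc hCm, h3, add_zero,
      Set.inter_iUnion₂, measure_biUnion hCc]
    · exact hpd.mono fun l => Set.inter_subset_right
    · exact fun l _ => hR.inter (meas_cyl l)
  rw [key μ inferInstance hμ1, key ν inferInstance hC1]
  refine tsum_congr fun l => ?_
  have hl := hlen _ l.2
  by_cases hx : ∃ u ∈ cyl l.1, u ∈ Rc
  · obtain ⟨u, hu, huR⟩ := hx
    have : Rc ∩ cyl l.1 = cyl l.1 := by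
      apply Set.inter_eq_right.2
      intro v hv i hi
      have hil : i < l.1.length := by
        rw [hl]; exact Nat.lt_succ_of_le (Finset.le_sup (f := id) hi)
      have : v i = u i := (hv ⟨i, hil⟩).trans (hu ⟨i, hil⟩).symm
      rw [this]; exact huR i hi
    rw [this]; exact h _ (hne _ l.2)
  · have : Rc ∩ cyl l.1 = ∅ := by
      ext u; simp only [Set.mem_inter_iff, Set.mem_empty_iff_false, iff_false]
      rintro ⟨h1, h2⟩; exact hx ⟨u, h2, h1⟩
    simp [this]

/-- weight of a continuation under a policy -/
def wt (p : List S → S → PMF S) : List S → S → List S → ENNReal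
  | _, _, [] => 1
  | h, s, t :: l => p h s t * wt p (h ++ [s]) t l

/-- sampling forced into the support -/
def samp (q : PMF S) (x : S) : S := if x ∈ q.support then x else q.support_nonempty.choose

theorem samp_mem (q : PMF S) (x : S) : samp q x ∈ q.support := by
  unfold samp; split_ifs with h
  · exact h
  · exact q.support_nonempty.choose_spec

/-- path generated by independent samples -/
def pth (p : List S → S → PMF S) (ω : List S × S → S) : List S → S → ℕ → S
  | _, s, 0 => s
  | h, s, n + 1 => pth p ω (h ++ [s]) (samp (p h s) (ω (h, s))) n

/-- event that the continuation is given -/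
def ev (p : List S → S → PMF S) (ω : List S × S → S) : List S → S → List S → Prop
  | _, _, [] => True
  | h, s, t :: l => samp (p h s) (ω (h, s)) = t ∧ ev p ω (h ++ [s]) t l

/-- the same, as an element of the path space -/
def pthP (p : List S → S → PMF S) (ω : List S × S → S) (h : List S) (s : S) : PathSpace S :=
  pth p ω h s

theorem pth_cyl (p : List S → S → PMF S) (ω : List S × S → S) (l : List S) :
    ∀ (h : List S) (s a : S), pthP p ω h s ∈ cyl (a :: l) ↔ s = a ∧ ev p ω h s l := by
  induction l with
  | nil => intro h s a; rw [mem_cyl_cons]; simp [mem_cyl_nil, ev, pthP, pth]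
  | cons b l ih =>
    intro h s a
    rw [mem_cyl_cons]
    have : tl (pthP p ω h s) =
      pthP p ω (h ++ [s]) (samp (p h s) (ω (h, s))) := rfl
    rw [this, ih]
    simp only [pthP, pth, ev]
    constructor
    · rintro ⟨h1, h2, h3⟩; subst h2; exact ⟨h1, rfl, h3⟩
    · rintro ⟨h1, h2, h3⟩; subst h2; exact ⟨h1, rfl, h3⟩

theorem meas_pth (p : List S → S → PMF S) (n : ℕ) (B : Set S) : ∀ (h : List S) (s : S),
    @MeasurableSet _ (@MeasurableSpace.pi (List S × S) (fun _ => S) (fun _ => ⊤))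
      {ω | pth p ω h s n ∈ B} := by
  let _ : MeasurableSpace S := ⊤
  induction n with
  | zero => intro h s; simp [pth]
  | succ n ih =>
    intro h s
    have : {ω : List S × S → S | pth p ω h s (n + 1) ∈ B} = ⋃ t ∈ (p h s).support,
      ({ω | ω (h, s) ∈ {x | samp (p h s) x = t}} ∩ {ω | pth p ω (h ++ [s]) t n ∈ B}) := by
      ext ω
      simp only [pth, Set.mem_ofPred_eq, Set.mem_iUnion, Set.mem_inter_iff]
      constructor
      · intro hh; exact ⟨_, samp_mem _ _, rfl, hh⟩
      · rintro ⟨t, _, h1, h2⟩; rw [h1]; exact h2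
    rw [this]
    refine MeasurableSet.biUnion (p h s).support_countable fun t _ => MeasurableSet.inter ?_ (ih _ _)
    exact (measurable_pi_apply (X := fun _ : List S × S => S) (h, s))
      (MeasurableSpace.measurableSet_top)

theorem pth_countable (p : List S → S → PMF S) (n : ℕ) : ∀ (h : List S) (s : S),
    ∃ C : Set (List S), C.Countable ∧ (∀ l ∈ C, l.length = n + 1) ∧
      ∀ ω, pthP p ω h s ∈ ⋃ l ∈ C, cyl l := by
  induction n with
  | zero =>
    intro h s
    refine ⟨{[s]}, by simp, by simp, fun ω => ?_⟩
    simp [pth_cyl, ev]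
  | succ n ih =>
    intro h s
    choose C h1 h2 h3 using ih (h ++ [s])
    refine ⟨⋃ t ∈ (p h s).support, (fun l => s :: l) '' C t, ?_, ?_, ?_⟩
    · exact Set.Countable.biUnion (p h s).support_countable fun t _ => (h1 t).image _
    · intro l hl
      simp only [Set.mem_iUnion, Set.mem_image] at hl
      obtain ⟨t, _, l', hl', rfl⟩ := hl
      simp [h2 t l' hl']
    · intro ω
      have := h3 (samp (p h s) (ω (h, s))) ω
      simp only [Set.mem_iUnion] at this
      obtain ⟨l, hl, hu⟩ := this
      simp only [Set.mem_iUnion]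
      refine ⟨s :: l, ⟨_, samp_mem _ _, l, hl, rfl⟩, ?_⟩
      rw [mem_cyl_cons]
      exact ⟨rfl, hu⟩

open MeasureTheory in
theorem ev_prob [MeasurableSpace S] [DiscreteMeasurableSpace S] (p : List S → S → PMF S)
    (l : List S) : ∀ (h : List S) (s : S) (F : Finset (List S × S)) (B : List S × S → Set S),
    (∀ i ∈ F, i.1.length < h.length) →
    Measure.infinitePi (fun i : List S × S => (p i.1 i.2).toMeasure)
      ({ω | ∀ i ∈ F, ω i ∈ B i} ∩ {ω | ev p ω h s l}) =
      (∏ i ∈ F, (p i.1 i.2).toMeasure (B i)) * wt p h s l := by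
  induction l with
  | nil =>
    intro h s F B _
    simp only [ev, wt, mul_one, Set.ofPred_true, Set.inter_univ]
    exact Measure.infinitePi_pi (μ := fun i : List S × S => (p i.1 i.2).toMeasure) (s := F) (t := B)
      (fun i _ => MeasurableSet.of_discrete)
  | cons t l ih =>
    intro h s F B hF
    have hnot : (h, s) ∉ F := fun hh => lt_irrefl _ (hF _ hh)
    have hB : ∀ i ∈ F, Function.update B (h, s) {x | samp (p h s) x = t} i = B i := by
      intro i hi
      rw [Function.update_of_ne]; rintro rfl; exact hnot hi
    have := ih (h ++ [s]) t (insert (h, s) F) (Function.update B (h, s) {x | samp (p h s) x = t}) (by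
      intro i hi
      rw [Finset.mem_insert] at hi
      rcases hi with rfl | hi
      · simp
      · have := hF i hi
        simp; omega)
    have hset : ({ω : List S × S → S | ∀ i ∈ F, ω i ∈ B i} ∩ {ω | ev p ω h s (t :: l)}) =
        {ω | ∀ i ∈ insert (h, s) F, ω i ∈ Function.update B (h, s) {x | samp (p h s) x = t} i} ∩
        {ω | ev p ω (h ++ [s]) t l} := by
      ext ω
      simp only [Set.mem_inter_iff, Set.mem_ofPred_eq, ev, Finset.forall_mem_insert,
        Function.update_self]
      constructor
      · rintro ⟨h1, h2, h3⟩
        exact ⟨⟨h2, fun i hi => by rw [hB i hi]; exact h1 i hi⟩, h3⟩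
      · rintro ⟨⟨h2, h1⟩, h3⟩
        exact ⟨fun i hi => by rw [← hB i hi]; exact h1 i hi, h2, h3⟩
    rw [hset, this, Finset.prod_insert hnot, Function.update_self,
      Finset.prod_congr rfl (fun i hi => by rw [hB i hi])]
    have hp : (p h s).toMeasure {x | samp (p h s) x = t} = p h s t := by
      by_cases ht : t ∈ (p h s).support
      · rw [← (p h s).toMeasure_apply_singleton t MeasurableSet.of_discrete]
        apply PMF.toMeasure_apply_eq_of_inter_support_eq _ MeasurableSet.of_discrete
          MeasurableSet.of_discrete
        ext x
        simp only [Set.mem_inter_iff, Set.mem_ofPred_eq, Set.mem_singleton_iff]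
        constructor
        · rintro ⟨h1, h2⟩; rw [samp, if_pos h2] at h1; exact ⟨h1, h2⟩
        · rintro ⟨h1, h2⟩; rw [samp, if_pos h2]; exact ⟨h1, h2⟩
      · have : {x | samp (p h s) x = t} = ∅ := by
          ext x; simp only [Set.mem_ofPred_eq, Set.mem_empty_iff_false, iff_false]
          rintro rfl; exact ht (samp_mem _ _)
        rw [this, measure_empty]
        exact ((PMF.apply_eq_zero_iff _ _).2 ht).symm
    simp only [wt]
    rw [hp]; ring

open MeasureTheory in
theorem exists_law (p : List S → S → PMF S) (s0 : S) :
    ∃ μ : Measure (PathSpace S), IsProbabilityMeasure μ ∧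
      (∀ a l, μ (cyl (a :: l)) = if a = s0 then wt p [] s0 l else 0) ∧
      ∀ n, ∃ C : Set (List S), C.Countable ∧ (∀ l ∈ C, l.length = n + 1) ∧
        μ (⋃ l ∈ C, cyl l) = 1 := by
  let _ : MeasurableSpace S := ⊤
  let P := Measure.infinitePi (fun i : List S × S => (p i.1 i.2).toMeasure)
  let f : (List S × S → S) → PathSpace S := fun ω => pthP p ω [] s0
  have hf : Measurable f := by
    refine measurable_pi_iff.2 fun n => ?_
    intro B _
    exact meas_pth p n B [] s0
  refine ⟨P.map f, Measure.isProbabilityMeasure_map hf.aemeasurable, ?_, ?_⟩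
  · intro a l
    rw [Measure.map_apply hf (meas_cyl _)]
    have hpre : f ⁻¹' cyl (a :: l) = {ω | s0 = a ∧ ev p ω [] s0 l} := by
      ext ω; exact pth_cyl p ω l [] s0 a
    rw [hpre]
    split_ifs with h
    · subst h
      have := ev_prob p l [] a ∅ (fun _ => Set.univ) (by simp)
      simpa using this
    · simp [Ne.symm h]
  · intro n
    obtain ⟨C, h1, h2, h3⟩ := pth_countable p n [] s0
    refine ⟨C, h1, h2, ?_⟩
    rw [Measure.map_apply hf (MeasurableSet.biUnion h1 fun l _ => meas_cyl l)]
    have : f ⁻¹' (⋃ l ∈ C, cyl l) = Set.univ := by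
      ext ω; simp only [Set.mem_univ, iff_true]; exact h3 ω
    rw [this]; exact measure_univ

/-- the distribution at a nature state -/
def natPMF (A : Arena S) (hA : A.Wellformed) (s : S) (hs : A.owner s = Player.nature) : PMF S :=
  ⟨fun t => ENNReal.ofReal (A.prob s t), by
    obtain ⟨h1, h2, -⟩ := hA s hs
    rw [ENNReal.summable.hasSum_iff, ← ENNReal.ofReal_tsum_of_nonneg h1 h2.summable, h2.tsum_eq,
      ENNReal.ofReal_one]⟩

theorem natPMF_apply (A : Arena S) (hA : A.Wellformed) (s : S) (hs : A.owner s = Player.nature)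
    (t : S) : natPMF A hA s hs t = ENNReal.ofReal (A.prob s t) := rfl

/-- one step distribution -/
def pol (A : Arena S) (hA : A.Wellformed) (σ1 : Strategy A Player.one)
    (σ2 : Strategy A Player.two) (h : List S) (s : S) : PMF S :=
  if hs : A.owner s = Player.nature then natPMF A hA s hs
  else if A.E s = ∅ then PMF.pure s
  else if A.owner s = Player.one then PMF.pure (σ1.next h s) else PMF.pure (σ2.next h s)

theorem nature_ne (A : Arena S) (hA : A.Wellformed) (s : S) (hs : A.owner s = Player.nature) :
    A.E s ≠ ∅ := by
  obtain ⟨-, h2, h3⟩ := hA s hs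
  rw [h3]
  intro h
  rw [Function.support_eq_empty_iff] at h
  rw [h] at h2
  exact zero_ne_one (HasSum.unique hasSum_zero h2)

theorem mc_head {A : Arena S} {σ1 : Strategy A Player.one} {σ2 : Strategy A Player.two} {s0 : S}
    {l : List S} (h : MC A σ1 σ2 s0 l) : l.head? = some s0 := by
  induction h with
  | root => rfl
  | one l s _ _ _ ih => cases l <;> simpa using ih
  | two l s _ _ _ ih => cases l <;> simpa using ih
  | nature l s t _ _ _ ih => cases l <;> simpa using ih
  | term l s _ _ ih => cases l <;> simpa using ih

theorem snoc2_inj {l l' : List S} {a b a' b' : S} (h : l ++ [a, b] = l' ++ [a', b']) :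
    l = l' ∧ a = a' ∧ b = b' := by
  have := List.append_inj' h rfl
  simpa using this

theorem mc_snoc (A : Arena S) (hA : A.Wellformed) (σ1 : Strategy A Player.one)
    (σ2 : Strategy A Player.two) (s0 : S) (l : List S) (s t : S) :
    MC A σ1 σ2 s0 (l ++ [s, t]) ↔ MC A σ1 σ2 s0 (l ++ [s]) ∧ pol A hA σ1 σ2 l s t ≠ 0 := by
  constructor
  · intro h
    generalize hL : l ++ [s, t] = L at h
    cases h with
    | root => have := congrArg List.length hL; simp at this
    | one l' s' h1 h2 h3 =>
      obtain ⟨rfl, rfl, rfl⟩ := snoc2_inj hL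
      exact ⟨h1, by simp [pol, h2, h3]⟩
    | two l' s' h1 h2 h3 =>
      obtain ⟨rfl, rfl, rfl⟩ := snoc2_inj hL
      exact ⟨h1, by simp [pol, h2, h3]⟩
    | nature l' s' t' h1 h2 h3 =>
      obtain ⟨rfl, rfl, rfl⟩ := snoc2_inj hL
      refine ⟨h1, ?_⟩
      obtain ⟨h4, -, h5⟩ := hA s h2
      rw [h5] at h3
      simp only [pol, h2, dif_pos, natPMF_apply, ne_eq, ENNReal.ofReal_eq_zero, not_le]
      exact lt_of_le_of_ne (h4 t) (Ne.symm h3)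
    | term l' s' h1 h2 =>
      obtain ⟨rfl, rfl, rfl⟩ := snoc2_inj hL
      refine ⟨h1, ?_⟩
      have : A.owner t ≠ Player.nature := fun h => nature_ne A hA _ h h2
      simp [pol, h2, this]
  · rintro ⟨h1, h2⟩
    by_cases hn : A.owner s = Player.nature
    · refine MC.nature l s t h1 hn ?_
      obtain ⟨h4, -, h5⟩ := hA s hn
      rw [h5]
      simp only [pol, hn, dif_pos, natPMF_apply, ne_eq, ENNReal.ofReal_eq_zero, not_le] at h2
      exact h2.ne'
    · by_cases hE : A.E s = ∅
      · simp only [pol, hn, hE, dif_neg, not_false_eq_true, if_true, PMF.pure_apply] at h2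
        have : t = s := by by_contra h; simp [h] at h2
        subst this; exact MC.term l t h1 hE
      · by_cases ho : A.owner s = Player.one
        · simp only [pol, hn, hE, ho, dif_neg, not_false_eq_true, if_true, if_false,
            PMF.pure_apply] at h2
          have : t = σ1.next l s := by by_contra h; simp [h] at h2
          subst this; exact MC.one l s h1 ho hE
        · have ho2 : A.owner s = Player.two := by
            cases h : A.owner s <;> simp_all
          simp only [pol, hn, hE, ho, dif_neg, not_false_eq_true, if_false,
            PMF.pure_apply] at h2
          have : t = σ2.next l s := by by_contra h; simp [h] at h2
          subst this; exact MC.two l s h1 ho2 hE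

theorem pathProb_snoc (A : Arena S) (l : List S) (s t : S) :
    pathProb A (l ++ [s, t]) = pathProb A (l ++ [s]) * stepProb A s t := by
  induction l with
  | nil => simp [pathProb]
  | cons a l ih =>
    cases l with
    | nil => simp [pathProb]
    | cons b l =>
      simp only [List.cons_append, pathProb] at ih ⊢
      rw [ih]; ring

theorem pol_step (A : Arena S) (hA : A.Wellformed) (σ1 : Strategy A Player.one)
    (σ2 : Strategy A Player.two) (l : List S) (s t : S) (h : pol A hA σ1 σ2 l s t ≠ 0) :
    ENNReal.ofReal (stepProb A s t) = pol A hA σ1 σ2 l s t := by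
  unfold pol stepProb at *
  by_cases hn : A.owner s = Player.nature
  · simp only [hn, if_true, dif_pos, natPMF_apply]
  · simp only [hn, if_false, dif_neg, not_false_eq_true] at h ⊢
    have key : ∀ a : S, PMF.pure a t ≠ 0 → ENNReal.ofReal 1 = PMF.pure a t := by
      intro a ha
      simp only [PMF.pure_apply] at ha ⊢
      have : t = a := by by_contra h; simp [h] at ha
      simp [this]
    split_ifs at h ⊢ <;> exact key _ h

theorem stepProb_nonneg (A : Arena S) (hA : A.Wellformed) (s t : S) : 0 ≤ stepProb A s t := by
  unfold stepProb; split_ifs with h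
  · exact (hA s h).1 t
  · exact zero_le_one

theorem cylWeight_snoc (A : Arena S) (hA : A.Wellformed) (σ1 : Strategy A Player.one)
    (σ2 : Strategy A Player.two) (s0 : S) (l : List S) (s t : S) :
    ENNReal.ofReal (cylWeight A σ1 σ2 s0 (l ++ [s, t])) =
      ENNReal.ofReal (cylWeight A σ1 σ2 s0 (l ++ [s])) * pol A hA σ1 σ2 l s t := by
  unfold cylWeight
  rw [mc_snoc A hA]
  by_cases hp : pol A hA σ1 σ2 l s t = 0
  · simp [hp]
  · by_cases hm : MC A σ1 σ2 s0 (l ++ [s])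
    · simp only [hm, hp, ne_eq, not_false_eq_true, and_self, if_true]
      rw [pathProb_snoc, ENNReal.ofReal_mul' (stepProb_nonneg A hA s t), pol_step A hA _ _ _ _ _ hp]
    · simp [hm]

theorem wt_snoc (p : List S → S → PMF S) (l : List S) (q : List S) (c t : S) :
    ∀ (h : List S) (s : S), h ++ s :: l = q ++ [c] →
      wt p h s (l ++ [t]) = wt p h s l * p q c t := by
  induction l with
  | nil =>
    intro h s hh
    have := List.append_inj' hh rfl
    obtain ⟨rfl, h2⟩ := this
    simp only [List.cons.injEq, and_true] at h2
    subst h2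
    simp [wt]
  | cons b l ih =>
    intro h s hh
    simp only [List.cons_append, wt]
    rw [ih (h ++ [s]) b (by simpa using hh), mul_assoc]

theorem cylWeight_wt (A : Arena S) (hA : A.Wellformed) (σ1 : Strategy A Player.one)
    (σ2 : Strategy A Player.two) (s0 a : S) (l : List S) :
    ENNReal.ofReal (cylWeight A σ1 σ2 s0 (a :: l)) =
      if a = s0 then wt (pol A hA σ1 σ2) [] s0 l else 0 := by
  split_ifs with h
  · subst h
    induction l using List.reverseRecOn with
    | nil => simp [cylWeight, wt, MC.root, pathProb]
    | append_singleton l t ih =>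
      obtain ⟨q, c, hqc⟩ : ∃ q c, a :: l = q ++ [c] :=
        ⟨(a :: l).dropLast, (a :: l).getLast (by simp), by
          rw [List.dropLast_append_getLast]⟩
      rw [wt_snoc _ l q c t [] a (by simpa using hqc), ← ih, hqc]
      have : a :: (l ++ [t]) = q ++ [c, t] := by
        rw [← List.cons_append, hqc]; simp
      rw [this]; exact cylWeight_snoc A hA σ1 σ2 a q c t
  · have : ¬ MC A σ1 σ2 s0 (a :: l) := by
      intro hm; have := mc_head hm; simp at this; exact h this
    simp [cylWeight, this]

open MeasureTheory in
theorem pathMeasure_eq (A : Arena S) (hA : A.Wellformed) (σ1 : Strategy A Player.one)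
    (σ2 : Strategy A Player.two) (s0 : S) :
    IsProbabilityMeasure (pathMeasure A σ1 σ2 s0) ∧
    (∀ a l, pathMeasure A σ1 σ2 s0 (cyl (a :: l)) =
      if a = s0 then wt (pol A hA σ1 σ2) [] s0 l else 0) ∧
    ∀ μ : Measure (PathSpace S), IsProbabilityMeasure μ →
      (∀ a l, μ (cyl (a :: l)) = if a = s0 then wt (pol A hA σ1 σ2) [] s0 l else 0) →
      μ = pathMeasure A σ1 σ2 s0 := by
  obtain ⟨ν, hν, hcyl, hC⟩ := exists_law (pol A hA σ1 σ2) s0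
  have hex : ∃ μ : MeasureTheory.Measure (PathSpace S), MeasureTheory.IsProbabilityMeasure μ ∧
      ∀ l : List S, l ≠ [] → μ (cyl l) = ENNReal.ofReal (cylWeight A σ1 σ2 s0 l) := by
    refine ⟨ν, hν, fun l hl => ?_⟩
    cases l with
    | nil => exact absurd rfl hl
    | cons a l => rw [hcyl, cylWeight_wt A hA]
  have huniq : ∀ μ : Measure (PathSpace S), IsProbabilityMeasure μ →
      (∀ a l, μ (cyl (a :: l)) = if a = s0 then wt (pol A hA σ1 σ2) [] s0 l else 0) → μ = ν := by
    intro μ _ hμ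
    refine law_unique μ ν (fun l hl => ?_) hC
    cases l with
    | nil => exact absurd rfl hl
    | cons a l => rw [hcyl, hμ]
  have hspec := hex.choose_spec
  have hdef : pathMeasure A σ1 σ2 s0 = hex.choose := by rw [pathMeasure, dif_pos hex]
  rw [hdef]
  have h2 : ∀ a l, hex.choose (cyl (a :: l)) =
      if a = s0 then wt (pol A hA σ1 σ2) [] s0 l else 0 := by
    intro a l; rw [hspec.2 _ (by simp), cylWeight_wt A hA]
  refine ⟨hspec.1, h2, fun μ hμ h => ?_⟩
  rw [huniq μ hμ h, huniq _ hspec.1 h2]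

/-- prepend a state -/
def consP (s : S) (u : PathSpace S) : PathSpace S := fun n => Nat.casesOn n s u

theorem meas_consP (s : S) : Measurable (consP s) := by
  let _ : MeasurableSpace S := ⊤
  refine measurable_pi_iff.2 fun n => ?_
  cases n with
  | zero => exact measurable_const
  | succ n => exact measurable_pi_apply (X := fun _ : ℕ => S) n

/-- shifted strategy -/
def shift {A : Arena S} {pl : Player} (s : S) (f : Strategy A pl) : Strategy A pl :=
  ⟨fun h c => f.next (s :: h) c, fun h c => f.valid (s :: h) c⟩

theorem wt_shift (A : Arena S) (hA : A.Wellformed) (σ1 : Strategy A Player.one)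
    (σ2 : Strategy A Player.two) (s : S) (l : List S) : ∀ (h : List S) (t : S),
    wt (pol A hA (shift s σ1) (shift s σ2)) h t l = wt (pol A hA σ1 σ2) (s :: h) t l := by
  induction l with
  | nil => intro h t; rfl
  | cons b l ih => intro h t; simp only [wt]; rw [ih]; rfl

open MeasureTheory in
theorem pathMeasure_decomp (A : Arena S) (hA : A.Wellformed) (σ1 : Strategy A Player.one)
    (σ2 : Strategy A Player.two) (s : S) :
    pathMeasure A σ1 σ2 s = Measure.sum (fun t => pol A hA σ1 σ2 [] s t •
      (pathMeasure A (shift s σ1) (shift s σ2) t).map (consP s)) := by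
  symm
  apply (pathMeasure_eq A hA σ1 σ2 s).2.2
  · constructor
    rw [Measure.sum_apply _ MeasurableSet.univ, ← (pol A hA σ1 σ2 [] s).tsum_coe]
    refine tsum_congr fun t => ?_
    have := (pathMeasure_eq A hA (shift s σ1) (shift s σ2) t).1
    rw [Measure.smul_apply, Measure.map_apply (meas_consP s) MeasurableSet.univ]
    simp
  · intro a l
    rw [Measure.sum_apply _ (meas_cyl _)]
    have hpre : consP s ⁻¹' cyl (a :: l) = if a = s then cyl l else ∅ := by
      ext u
      rw [Set.mem_preimage, mem_cyl_cons]
      have h1 : tl (consP s u) = u := rfl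
      have h2 : consP s u 0 = s := rfl
      rw [h1, h2]
      split_ifs with h
      · simp [h]
      · simp [Ne.symm h]
    simp only [Measure.smul_apply, Measure.map_apply (meas_consP s) (meas_cyl _), hpre]
    split_ifs with h
    · cases l with
      | nil =>
        have : (cyl [] : Set (PathSpace S)) = Set.univ := by
          ext u; simp [mem_cyl_nil]
        rw [this]
        simp only [wt]
        rw [← (pol A hA σ1 σ2 [] s).tsum_coe]
        refine tsum_congr fun t => ?_
        have := (pathMeasure_eq A hA (shift s σ1) (shift s σ2) t).1
        simp
      | cons b l =>
        rw [tsum_eq_single b]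
        · rw [(pathMeasure_eq A hA (shift s σ1) (shift s σ2) b).2.1, if_pos rfl, wt_shift]
          rfl
        · intro t ht
          rw [(pathMeasure_eq A hA (shift s σ1) (shift s σ2) t).2.1, if_neg (Ne.symm ht)]
          simp
    · simp

theorem payoff_mem (A : Arena S) (pri : S → ℕ) (R : S → ℝ)
    (hR : ∀ s, A.E s = ∅ → R s ∈ Set.Icc (0:ℝ) 1) (u : PathSpace S) :
    payoff A pri R u ∈ Set.Icc (0:ℝ) 1 := by
  unfold payoff
  split_ifs with h h2
  · exact hR _ (Nat.find_spec h)
  · simp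
  · simp

theorem payoff_consP (A : Arena S) (pri : S → ℕ) (R : S → ℝ) (s : S) (hs : A.E s ≠ ∅)
    (u : PathSpace S) : payoff A pri R (consP s u) = payoff A pri R u := by
  unfold payoff
  by_cases h : ∃ i, A.E (u i) = ∅
  · have h' : ∃ i, A.E (consP s u i) = ∅ := by
      obtain ⟨i, hi⟩ := h; exact ⟨i + 1, hi⟩
    rw [dif_pos h, dif_pos h']
    have : Nat.find h' = Nat.find h + 1 := Nat.find_comp_succ h' h hs
    rw [this]; rfl
  · have h' : ¬ ∃ i, A.E (consP s u i) = ∅ := by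
      rintro ⟨i, hi⟩
      cases i with
      | zero => exact hs hi
      | succ i => exact h ⟨i, hi⟩
    rw [dif_neg h, dif_neg h']
    have : {n | {i | pri (consP s u i) = n}.Infinite} = {n | {i | pri (u i) = n}.Infinite} := by
      ext n
      simp only [Set.mem_ofPred_eq, ← Nat.frequently_atTop_iff_infinite, Filter.frequently_atTop]
      constructor
      · intro hh a
        obtain ⟨b, hb, hb'⟩ := hh (a + 1)
        cases b with
        | zero => omega
        | succ b => exact ⟨b, by omega, hb'⟩
      · intro hh a
        obtain ⟨b, hb, hb'⟩ := hh a
        exact ⟨b + 1, by omega, hb'⟩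
    rw [this]

theorem meas_payoff (A : Arena S) (pri : S → ℕ) (hpri : (Set.range pri).Finite) (R : S → ℝ) :
    Measurable (payoff A pri R) := by
  have hinf : ∀ n, MeasurableSet {u : PathSpace S | {i | pri (u i) = n}.Infinite} := by
    intro n
    have : {u : PathSpace S | {i | pri (u i) = n}.Infinite} =
        ⋂ a : ℕ, ⋃ b : ℕ, ⋃ _ : a ≤ b, {u : PathSpace S | u b ∈ {x | pri x = n}} := by
      ext u
      simp only [Set.mem_ofPred_eq, ← Nat.frequently_atTop_iff_infinite, Filter.frequently_atTop,
        Set.mem_iInter, Set.mem_iUnion, exists_prop, ge_iff_le]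
    rw [this]
    exact MeasurableSet.iInter fun a => MeasurableSet.iUnion fun b => MeasurableSet.iUnion fun _ =>
      meas_coord _ _
  have heven : MeasurableSet
      {u : PathSpace S | Even (sSup {n | {i | pri (u i) = n}.Infinite})} := by
    have : {u : PathSpace S | Even (sSup {n | {i | pri (u i) = n}.Infinite})} =
        ⋃ D : Finset ℕ, ⋃ _ : Even (sSup (D : Set ℕ)),
          ⋂ n : ℕ, {u : PathSpace S | {i | pri (u i) = n}.Infinite ↔ n ∈ D} := by
      ext u
      simp only [Set.mem_ofPred_eq, Set.mem_iInter, Set.mem_iUnion, exists_prop]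
      constructor
      · intro h
        have hfin : {n | {i | pri (u i) = n}.Infinite}.Finite := by
          refine hpri.subset fun n hn => ?_
          obtain ⟨i, hi⟩ := Set.Infinite.nonempty hn
          exact ⟨u i, hi⟩
        refine ⟨hfin.toFinset, by simpa using h, fun n => by simp⟩
      · rintro ⟨D, hD, h⟩
        have : {n | {i | pri (u i) = n}.Infinite} = (D : Set ℕ) := by
          ext n; exact h n
        rw [this]; exact hD
    rw [this]
    refine MeasurableSet.iUnion fun D => MeasurableSet.iUnion fun _ => MeasurableSet.iInter fun n => ?_
    by_cases hn : n ∈ D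
    · simpa [hn] using hinf n
    · simp only [hn, iff_false]; exact (hinf n).compl
  have hterm : MeasurableSet {u : PathSpace S | ∃ i, A.E (u i) = ∅} := by
    have : {u : PathSpace S | ∃ i, A.E (u i) = ∅} =
        ⋃ i, {u : PathSpace S | u i ∈ {x | A.E x = ∅}} := by ext u; simp
    rw [this]
    exact MeasurableSet.iUnion fun i => meas_coord _ _
  intro B _
  have : payoff A pri R ⁻¹' B =
      (⋃ i, ({u : PathSpace S | u i ∈ {x | A.E x = ∅ ∧ R x ∈ B}} ∩
        ⋂ j : ℕ, ⋂ _ : j < i, {u : PathSpace S | u j ∈ {x | A.E x ≠ ∅}})) ∪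
      ({u : PathSpace S | ∃ i, A.E (u i) = ∅}ᶜ ∩
        (({u : PathSpace S | Even (sSup {n | {i | pri (u i) = n}.Infinite})} ∩ {_u | (1:ℝ) ∈ B}) ∪
        ({u : PathSpace S | Even (sSup {n | {i | pri (u i) = n}.Infinite})}ᶜ ∩ {_u | (0:ℝ) ∈ B}))) := by
    ext u
    simp only [Set.mem_preimage, Set.mem_union, Set.mem_iUnion, Set.mem_inter_iff, Set.mem_iInter,
      Set.mem_compl_iff, Set.mem_ofPred_eq]
    by_cases h : ∃ i, A.E (u i) = ∅
    · have hp : payoff A pri R u = R (u (Nat.find h)) := by unfold payoff; rw [dif_pos h]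
      rw [hp]
      constructor
      · intro hB
        exact Or.inl ⟨Nat.find h, ⟨Nat.find_spec h, hB⟩, fun j hj => Nat.find_min h hj⟩
      · rintro (⟨i, ⟨h1, h2⟩, h3⟩ | ⟨h1, _⟩)
        · have : Nat.find h = i := (Nat.find_eq_iff h).2 ⟨h1, h3⟩
          rw [this]; exact h2
        · exact absurd h h1
    · have hno : ¬ ∃ i, (A.E (u i) = ∅ ∧ R (u i) ∈ B) ∧ ∀ j < i, A.E (u j) ≠ ∅ := by
        rintro ⟨i, ⟨h1, _⟩, _⟩; exact h ⟨i, h1⟩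
      unfold payoff
      rw [dif_neg h]
      by_cases he : Even (sSup {n | {i | pri (u i) = n}.Infinite})
      · simp only [he, hno, h, if_true, false_or, not_false_eq_true, true_and, not_true, false_and,
          or_false]
      · simp only [he, hno, h, if_false, false_or, not_false_eq_true, true_and, false_and]
  rw [this]
  refine MeasurableSet.union (MeasurableSet.iUnion fun i => (meas_coord _ _).inter
    (MeasurableSet.iInter fun j => MeasurableSet.iInter fun _ => meas_coord _ _)) ?_
  exact hterm.compl.inter ((heven.inter (MeasurableSet.const _)).union
    (heven.compl.inter (MeasurableSet.const _)))

open MeasureTheory in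
theorem integrable_payoff (A : Arena S) (pri : S → ℕ) (hpri : (Set.range pri).Finite) (R : S → ℝ)
    (hR : ∀ s, A.E s = ∅ → R s ∈ Set.Icc (0:ℝ) 1) (μ : Measure (PathSpace S))
    [IsFiniteMeasure μ] : Integrable (payoff A pri R) μ := by
  refine Integrable.of_bound (meas_payoff A pri hpri R).aestronglyMeasurable 1 ?_
  refine Filter.Eventually.of_forall fun u => ?_
  have := payoff_mem A pri R hR u
  rw [Real.norm_eq_abs, abs_of_nonneg this.1]; exact this.2

open MeasureTheory in
theorem exp_mem (A : Arena S) (hA : A.Wellformed) (pri : S → ℕ) (hpri : (Set.range pri).Finite)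
    (R : S → ℝ) (hR : ∀ s, A.E s = ∅ → R s ∈ Set.Icc (0:ℝ) 1) (σ1 : Strategy A Player.one)
    (σ2 : Strategy A Player.two) (s : S) :
    0 ≤ expReward A pri R σ1 σ2 s ∧ expReward A pri R σ1 σ2 s ≤ 1 := by
  have := (pathMeasure_eq A hA σ1 σ2 s).1
  constructor
  · exact integral_nonneg fun u => (payoff_mem A pri R hR u).1
  · have h := integral_mono (integrable_payoff A pri hpri R hR (pathMeasure A σ1 σ2 s))
      (integrable_const (1:ℝ)) (fun u => (payoff_mem A pri R hR u).2)
    rw [integral_const] at h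
    simpa [expReward] using h

open MeasureTheory in
theorem exp_term (A : Arena S) (hA : A.Wellformed) (pri : S → ℕ)
    (R : S → ℝ) (σ1 : Strategy A Player.one)
    (σ2 : Strategy A Player.two) (s : S) (hs : A.E s = ∅) :
    expReward A pri R σ1 σ2 s = R s := by
  have hP := (pathMeasure_eq A hA σ1 σ2 s).1
  have h1 : pathMeasure A σ1 σ2 s (cyl [s]) = 1 := by
    rw [(pathMeasure_eq A hA σ1 σ2 s).2.1]; simp [wt]
  have hae : ∀ᵐ u ∂(pathMeasure A σ1 σ2 s), payoff A pri R u = R s := by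
    have h2 : ∀ᵐ u ∂(pathMeasure A σ1 σ2 s), u ∈ cyl [s] := by
      rw [ae_iff]
      exact (prob_compl_eq_zero_iff (meas_cyl [s])).2 h1
    filter_upwards [h2] with u hu
    have hu0 : u 0 = s := ((mem_cyl_cons s [] u).1 hu).1
    have hex : ∃ i, A.E (u i) = ∅ := ⟨0, by rw [hu0]; exact hs⟩
    have : Nat.find hex = 0 := (Nat.find_eq_zero hex).2 (by rw [hu0]; exact hs)
    unfold payoff
    rw [dif_pos hex, this, hu0]
  unfold expReward
  rw [integral_congr_ae hae]
  simp

open MeasureTheory in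
theorem exp_step (A : Arena S) (hA : A.Wellformed) (pri : S → ℕ) (hpri : (Set.range pri).Finite)
    (R : S → ℝ) (hR : ∀ s, A.E s = ∅ → R s ∈ Set.Icc (0:ℝ) 1) (σ1 : Strategy A Player.one)
    (σ2 : Strategy A Player.two) (s : S) (hs : A.E s ≠ ∅) :
    HasSum (fun t => (pol A hA σ1 σ2 [] s t).toReal *
      expReward A pri R (shift s σ1) (shift s σ2) t) (expReward A pri R σ1 σ2 s) := by
  have hP := (pathMeasure_eq A hA σ1 σ2 s).1
  have hint := integrable_payoff A pri hpri R hR (pathMeasure A σ1 σ2 s)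
  have hd := pathMeasure_decomp A hA σ1 σ2 s
  unfold expReward
  rw [hd] at hint ⊢
  have := hasSum_integral_measure hint
  suffices hf : (fun t => (pol A hA σ1 σ2 [] s t).toReal *
      ∫ u, payoff A pri R u ∂(pathMeasure A (shift s σ1) (shift s σ2) t)) = fun t =>
      ∫ u, payoff A pri R u ∂(pol A hA σ1 σ2 [] s t •
        (pathMeasure A (shift s σ1) (shift s σ2) t).map (consP s)) by
    rw [hf]; exact this
  funext t
  rw [integral_smul_measure, integral_map (meas_consP s).aemeasurable
    (meas_payoff A pri hpri R).aestronglyMeasurable]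
  simp only [payoff_consP A pri R s hs, smul_eq_mul]

/-- agreement of strategies on histories starting at `t` -/
def Agree {A : Arena S} {pl : Player} (t : S) (f g : Strategy A pl) : Prop :=
  f.next [] t = g.next [] t ∧ ∀ h c, f.next (t :: h) c = g.next (t :: h) c

theorem exp_congr (A : Arena S) (hA : A.Wellformed) (pri : S → ℕ)
    (R : S → ℝ) (σ1 τ1 : Strategy A Player.one) (σ2 τ2 : Strategy A Player.two) (t : S)
    (h1 : Agree t σ1 τ1) (h2 : Agree t σ2 τ2) :
    expReward A pri R σ1 σ2 t = expReward A pri R τ1 τ2 t := by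
  have hw : ∀ l h c, wt (pol A hA σ1 σ2) (t :: h) c l = wt (pol A hA τ1 τ2) (t :: h) c l := by
    intro l
    induction l with
    | nil => intro h c; rfl
    | cons b l ih =>
      intro h c
      simp only [wt]
      rw [List.cons_append, ih]
      simp only [pol, h1.2, h2.2]
  have hw0 : ∀ l, wt (pol A hA σ1 σ2) [] t l = wt (pol A hA τ1 τ2) [] t l := by
    intro l
    cases l with
    | nil => rfl
    | cons b l =>
      simp only [wt, List.nil_append]
      rw [hw]
      simp only [pol, h1.1, h2.1]
  have : pathMeasure A σ1 σ2 t = pathMeasure A τ1 τ2 t := by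
    apply (pathMeasure_eq A hA τ1 τ2 t).2.2
    · exact (pathMeasure_eq A hA σ1 σ2 t).1
    · intro a l
      rw [(pathMeasure_eq A hA σ1 σ2 t).2.1, hw0]
  unfold expReward; rw [this]

theorem agree_refl {A : Arena S} {pl : Player} (t : S) (f : Strategy A pl) : Agree t f f :=
  ⟨rfl, fun _ _ => rfl⟩

/-- play `f` at the first step, then the family `g` -/
def comb {A : Arena S} {pl : Player} (f : Strategy A pl) (g : S → Strategy A pl) :
    Strategy A pl where
  next h c := match h with
    | [] => f.next [] c
    | [_] => (g c).next [] c
    | _ :: t :: h' => (g t).next (t :: h') c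
  valid h c ho hE := by
    match h with
    | [] => exact f.valid _ _ ho hE
    | [_] => exact (g c).valid _ _ ho hE
    | _ :: t :: h' => exact (g t).valid _ _ ho hE

theorem comb_agree {A : Arena S} {pl : Player} (f : Strategy A pl) (g : S → Strategy A pl)
    (s t : S) : Agree t (shift s (comb f g)) (g t) := ⟨rfl, fun _ _ => rfl⟩

theorem exists_strategy (A : Arena S) (pl : Player) : Nonempty (Strategy A pl) := by
  refine ⟨⟨fun _ c => if h : (A.E c).Nonempty then h.choose else c, fun _ c _ hE => ?_⟩⟩
  have h := Set.nonempty_iff_ne_empty.2 hE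
  simp only [h, dif_pos]; exact h.choose_spec

theorem exists_first (A : Arena S) (pl : Player) (s t : S) (ht : t ∈ A.E s) :
    ∃ f : Strategy A pl, f.next [] s = t := by
  obtain ⟨g⟩ := exists_strategy A pl
  refine ⟨⟨fun h c => if c = s then t else g.next h c, fun h c ho hE => ?_⟩, by simp⟩
  split_ifs with hc
  · rw [hc]; exact ht
  · exact g.valid h c ho hE

theorem pmf_hasSum (q : PMF S) : HasSum (fun t => (q t).toReal) 1 := by
  have h := ENNReal.hasSum_toReal (f := q) (by rw [q.tsum_coe]; simp)
  rwa [← ENNReal.tsum_toReal_eq (fun t => q.apply_ne_top t), q.tsum_coe, ENNReal.toReal_one] at h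

theorem pmf_summable (q : PMF S) (f : S → ℝ) (h0 : ∀ t, 0 ≤ f t) (h1 : ∀ t, f t ≤ 1) :
    Summable (fun t => (q t).toReal * f t) := by
  refine Summable.of_nonneg_of_le (fun t => mul_nonneg ENNReal.toReal_nonneg (h0 t)) (fun t => ?_)
    (pmf_hasSum q).summable
  exact mul_le_of_le_one_right ENNReal.toReal_nonneg (h1 t)

section values

variable (A : Arena S) (hA : A.Wellformed) (pri : S → ℕ) (hpri : (Set.range pri).Finite)
    (R : S → ℝ) (hR : ∀ s, A.E s = ∅ → R s ∈ Set.Icc (0:ℝ) 1)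

theorem sup_bdd (hA : A.Wellformed) (hpri : (Set.range pri).Finite)
    (hR : ∀ s, A.E s = ∅ → R s ∈ Set.Icc (0:ℝ) 1) (σ2 : Strategy A Player.two) (s : S) :
    BddAbove (Set.range fun σ1 => expReward A pri R σ1 σ2 s) :=
  ⟨1, by rintro _ ⟨σ1, rfl⟩; exact (exp_mem A hA pri hpri R hR σ1 σ2 s).2⟩

theorem sup_mem (hA : A.Wellformed) (hpri : (Set.range pri).Finite)
    (hR : ∀ s, A.E s = ∅ → R s ∈ Set.Icc (0:ℝ) 1) (σ2 : Strategy A Player.two) (s : S) :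
    0 ≤ (⨆ σ1, expReward A pri R σ1 σ2 s) ∧ (⨆ σ1, expReward A pri R σ1 σ2 s) ≤ 1 := by
  have := exists_strategy A Player.one
  refine ⟨Real.iSup_nonneg fun σ1 => (exp_mem A hA pri hpri R hR σ1 σ2 s).1,
    ciSup_le fun σ1 => (exp_mem A hA pri hpri R hR σ1 σ2 s).2⟩

theorem inf_bdd (hA : A.Wellformed) (hpri : (Set.range pri).Finite)
    (hR : ∀ s, A.E s = ∅ → R s ∈ Set.Icc (0:ℝ) 1) (s : S) :
    BddBelow (Set.range fun σ2 => ⨆ σ1, expReward A pri R σ1 σ2 s) :=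
  ⟨0, by rintro _ ⟨σ2, rfl⟩; exact (sup_mem A pri R hA hpri hR σ2 s).1⟩

theorem val_mem (hA : A.Wellformed) (hpri : (Set.range pri).Finite)
    (hR : ∀ s, A.E s = ∅ → R s ∈ Set.Icc (0:ℝ) 1) (s : S) :
    0 ≤ upperValue A pri R s ∧ upperValue A pri R s ≤ 1 := by
  obtain ⟨σ2⟩ := exists_strategy A Player.two
  refine ⟨Real.iInf_nonneg fun σ2 => (sup_mem A pri R hA hpri hR σ2 s).1, ?_⟩
  exact (ciInf_le (inf_bdd A pri R hA hpri hR s) σ2).trans (sup_mem A pri R hA hpri hR σ2 s).2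

theorem val_le (hA : A.Wellformed) (hpri : (Set.range pri).Finite)
    (hR : ∀ s, A.E s = ∅ → R s ∈ Set.Icc (0:ℝ) 1) (s : S) (hs : A.E s ≠ ∅) (x : ℝ)
    (σ2 : Strategy A Player.two)
    (h : ∀ σ1, ∑' t, (pol A hA σ1 σ2 [] s t).toReal * upperValue A pri R t ≤ x) :
    upperValue A pri R s ≤ x := by
  have n1 := exists_strategy A Player.one
  have n2 := exists_strategy A Player.two
  refine le_of_forall_pos_le_add fun ε hε => ?_
  have hch : ∀ t, ∃ τ : Strategy A Player.two,
      (⨆ σ1, expReward A pri R σ1 τ t) < upperValue A pri R t + ε := fun t =>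
    exists_lt_of_ciInf_lt (lt_add_of_pos_right _ hε)
  choose g hg using hch
  refine (ciInf_le (inf_bdd A pri R hA hpri hR s) (comb σ2 g)).trans (ciSup_le fun σ1 => ?_)
  have hst := exp_step A hA pri hpri R hR σ1 (comb σ2 g) s hs
  have hpol : pol A hA σ1 (comb σ2 g) [] s = pol A hA σ1 σ2 [] s := rfl
  rw [hpol] at hst
  have hV := (pmf_summable (pol A hA σ1 σ2 [] s) (upperValue A pri R)
    (fun t => (val_mem A pri R hA hpri hR t).1) (fun t => (val_mem A pri R hA hpri hR t).2)).hasSum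
  have hV2 := hV.add ((pmf_hasSum (pol A hA σ1 σ2 [] s)).mul_right ε)
  refine (hasSum_le (fun t => ?_) hst hV2).trans (by rw [one_mul]; linarith [h σ1])
  rw [← mul_add]
  refine mul_le_mul_of_nonneg_left ?_ ENNReal.toReal_nonneg
  rw [exp_congr A hA pri R (shift s σ1) (shift s σ1) _ (g t) t (agree_refl _ _)
    (comb_agree σ2 g s t)]
  exact (le_ciSup (sup_bdd A pri R hA hpri hR (g t) t) _).trans (hg t).le

theorem le_val (hA : A.Wellformed) (hpri : (Set.range pri).Finite)
    (hR : ∀ s, A.E s = ∅ → R s ∈ Set.Icc (0:ℝ) 1) (s : S) (hs : A.E s ≠ ∅) (x : ℝ)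
    (h : ∀ σ2, ∃ σ1, x ≤ ∑' t, (pol A hA σ1 σ2 [] s t).toReal * upperValue A pri R t) :
    x ≤ upperValue A pri R s := by
  have n1 := exists_strategy A Player.one
  have n2 := exists_strategy A Player.two
  refine le_ciInf fun σ2 => ?_
  refine le_of_forall_pos_le_add fun ε hε => ?_
  obtain ⟨σ1, hσ⟩ := h σ2
  have hch : ∀ t, ∃ τ : Strategy A Player.one,
      (⨆ σ1, expReward A pri R σ1 (shift s σ2) t) - ε < expReward A pri R τ (shift s σ2) t :=
    fun t => exists_lt_of_lt_ciSup (sub_lt_self _ hε)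
  choose g hg using hch
  rw [← sub_le_iff_le_add]
  refine le_trans ?_ (le_ciSup (sup_bdd A pri R hA hpri hR σ2 s) (comb σ1 g))
  have hst := exp_step A hA pri hpri R hR (comb σ1 g) σ2 s hs
  have hpol : pol A hA (comb σ1 g) σ2 [] s = pol A hA σ1 σ2 [] s := rfl
  rw [hpol] at hst
  have hV := (pmf_summable (pol A hA σ1 σ2 [] s) (upperValue A pri R)
    (fun t => (val_mem A pri R hA hpri hR t).1) (fun t => (val_mem A pri R hA hpri hR t).2)).hasSum
  have hV2 := hV.sub ((pmf_hasSum (pol A hA σ1 σ2 [] s)).mul_right ε)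
  refine le_trans (by rw [one_mul]; linarith) (hasSum_le (fun t => ?_) hV2 hst)
  rw [← mul_sub]
  refine mul_le_mul_of_nonneg_left ?_ ENNReal.toReal_nonneg
  rw [exp_congr A hA pri R _ (g t) (shift s σ2) (shift s σ2) t (comb_agree σ1 g s t)
    (agree_refl _ _)]
  have h1 : upperValue A pri R t ≤ ⨆ σ1, expReward A pri R σ1 (shift s σ2) t :=
    ciInf_le (inf_bdd A pri R hA hpri hR t) (shift s σ2)
  linarith [hg t]

end values

theorem pure_sum (a : S) (f : S → ℝ) : ∑' t, (PMF.pure a t).toReal * f t = f a := by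
  rw [tsum_eq_single a]
  · simp
  · intro t ht; simp [ht]

/-- **Bellman fixed-point property of the upper value** of a 2½-player parity game. -/
theorem upperValue_fixedPoint_bellman {S : Type} (A : Arena S) (hA : A.Wellformed)
    (pri : S → ℕ) (hpri : (Set.range pri).Finite)
    (R : S → ℝ) (hR : ∀ s, A.E s = ∅ → R s ∈ Set.Icc (0:ℝ) 1) :
    bellman A R (upperValue A pri R) = upperValue A pri R := by
  funext s
  unfold bellman
  split_ifs with hs
  · have n1 := exists_strategy A Player.one
    have n2 := exists_strategy A Player.two
    unfold upperValue
    simp only [exp_term A hA pri R _ _ s hs, ciSup_const, ciInf_const]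
  · have hne := Set.nonempty_iff_ne_empty.2 hs
    have hba : BddAbove (upperValue A pri R '' A.E s) :=
      ⟨1, by rintro _ ⟨t, _, rfl⟩; exact (val_mem A pri R hA hpri hR t).2⟩
    have hbb : BddBelow (upperValue A pri R '' A.E s) :=
      ⟨0, by rintro _ ⟨t, _, rfl⟩; exact (val_mem A pri R hA hpri hR t).1⟩
    cases ho : A.owner s with
    | one =>
      simp only
      have hp : ∀ σ1 σ2, pol A hA σ1 σ2 [] s = PMF.pure (σ1.next [] s) := by
        intro σ1 σ2; simp [pol, ho, hs]
      apply le_antisymm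
      · refine csSup_le (hne.image _) ?_
        rintro _ ⟨t, ht, rfl⟩
        refine le_val A pri R hA hpri hR s hs _ fun σ2 => ?_
        obtain ⟨f, hf⟩ := exists_first A Player.one s t ht
        exact ⟨f, by rw [hp, pure_sum, hf]⟩
      · obtain ⟨σ2⟩ := exists_strategy A Player.two
        refine val_le A pri R hA hpri hR s hs _ σ2 fun σ1 => ?_
        rw [hp, pure_sum]
        exact le_csSup hba ⟨_, σ1.valid [] s ho hs, rfl⟩
    | two =>
      simp only
      have hp : ∀ σ1 σ2, pol A hA σ1 σ2 [] s = PMF.pure (σ2.next [] s) := by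
        intro σ1 σ2; simp [pol, ho, hs]
      apply le_antisymm
      · obtain ⟨σ1⟩ := exists_strategy A Player.one
        refine le_val A pri R hA hpri hR s hs _ fun σ2 => ⟨σ1, ?_⟩
        rw [hp, pure_sum]
        exact csInf_le hbb ⟨_, σ2.valid [] s ho hs, rfl⟩
      · refine le_csInf (hne.image _) ?_
        rintro _ ⟨t, ht, rfl⟩
        obtain ⟨f, hf⟩ := exists_first A Player.two s t ht
        refine val_le A pri R hA hpri hR s hs _ f fun σ1 => ?_
        rw [hp, pure_sum, hf]
    | nature =>
      simp only
      obtain ⟨w1, w2, w3⟩ := hA s ho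
      have hp : ∀ σ1 σ2, ∑' t, (pol A hA σ1 σ2 [] s t).toReal * upperValue A pri R t =
          ∑' t : A.E s, A.prob s t * upperValue A pri R t := by
        intro σ1 σ2
        have : ∀ t, (pol A hA σ1 σ2 [] s t).toReal = A.prob s t := by
          intro t
          simp only [pol, ho, dif_pos, natPMF_apply, ENNReal.toReal_ofReal (w1 t)]
        simp only [this]
        symm
        apply tsum_subtype_eq_of_support_subset (f := fun t => A.prob s t * upperValue A pri R t)
        rw [w3]
        intro t ht h0
        apply ht
        simp only
        rw [h0, zero_mul]
      obtain ⟨σ1⟩ := exists_strategy A Player.one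
      obtain ⟨σ2⟩ := exists_strategy A Player.two
      apply le_antisymm
      · exact le_val A pri R hA hpri hR s hs _ fun σ2 => ⟨σ1, (hp σ1 σ2).ge⟩
      · exact val_le A pri R hA hpri hR s hs _ σ2 fun σ1 => (hp σ1 σ2).le
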